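/- Let 0 ≤ θ ≤ π. Then the maximum over φ ∈ [0, π] of ∫_{φ − θ/2}^{φ + θ/2} |cos t| dt equals 2 sin(θ/2), and this maximum is attained at φ = 0 (and at φ = π). -/

import Mathlib

open Real

/-!
A window of length at most one period that fills a superlevel set `{f ≥ c}` of a periodic
function `f` maximises the integral of `f` among all windows of its length. Indeed `f` is at most
`c + max (f - c) 0`, and the integral of the nonnegative periodic function `max (f - c) 0` over a
window is at most its integral over a full period; both inequalities are equalities for the
superlevel window. For `f = |cos|` with period `π` and `c = cos (θ / 2)`, this window is
`[-θ / 2, θ / 2]`.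
-/

section PeriodicWindow

open Function MeasureTheory

variable {f : ℝ → ℝ} {T a b x y : ℝ}

lemma periodic_intervalIntegral_le_add_integral_max (hf : Periodic f T)
    (h_int : ∀ t₁ t₂, IntervalIntegrable f volume t₁ t₂) (c : ℝ)
    (hxy : x ≤ y) (hyT : y ≤ x + T) (s : ℝ) :
    ∫ t in x..y, f t ≤ (y - x) * c + ∫ t in s..s + T, max (f t - c) 0 := by
  have h_excess (t₁ t₂ : ℝ) : IntervalIntegrable (fun t => max (f t - c) 0) volume t₁ t₂ :=
    have h := (h_int t₁ t₂).sub intervalIntegrable_const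
    ⟨h.1.pos_part, h.2.pos_part⟩
  have h_periodic : Periodic (fun t => max (f t - c) 0) T := hf.comp fun u => max (u - c) 0
  calc ∫ t in x..y, f t
      ≤ ∫ t in x..y, (c + max (f t - c) 0) :=
        intervalIntegral.integral_mono_on hxy (h_int x y)
          (intervalIntegrable_const.add (h_excess x y))
          fun t _ => sub_le_iff_le_add'.mp (le_max_left _ _)
    _ = (y - x) * c + ∫ t in x..y, max (f t - c) 0 := by
        rw [intervalIntegral.integral_add intervalIntegrable_const (h_excess x y),
          intervalIntegral.integral_const, smul_eq_mul]
    _ ≤ (y - x) * c + ∫ t in x..x + T, max (f t - c) 0 := by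
        gcongr
        exact intervalIntegral.integral_mono_interval le_rfl hxy hyT
          (.of_forall fun t => le_max_right _ _) (h_excess x (x + T))
    _ = (y - x) * c + ∫ t in s..s + T, max (f t - c) 0 := by
        rw [h_periodic.intervalIntegral_add_eq x s]

lemma integral_max_sub_eq_of_superlevel {c d : ℝ} (hab : a ≤ b) (hbd : b ≤ d)
    (h_int : IntervalIntegrable f volume a b)
    (h_ge : ∀ t ∈ Set.Icc a b, c ≤ f t) (h_le : ∀ t ∈ Set.Icc b d, f t ≤ c) :
    ∫ t in a..d, max (f t - c) 0 = (∫ t in a..b, f t) - (b - a) * c := by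
  have h_left : Set.EqOn (fun t => max (f t - c) 0) (fun t => f t - c) (Set.uIcc a b) :=
    fun t ht => max_eq_left (sub_nonneg.mpr (h_ge t (Set.uIcc_of_le hab ▸ ht)))
  have h_right : Set.EqOn (fun t => max (f t - c) 0) (fun _ => 0) (Set.uIcc b d) :=
    fun t ht => max_eq_right (sub_nonpos.mpr (h_le t (Set.uIcc_of_le hbd ▸ ht)))
  have h_int_left : IntervalIntegrable (fun t => max (f t - c) 0) volume a b :=
    (h_int.sub intervalIntegrable_const).congr (h_left.symm.mono Set.uIoc_subset_uIcc)
  have h_int_right : IntervalIntegrable (fun t => max (f t - c) 0) volume b d :=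
    intervalIntegrable_const.congr (h_right.symm.mono Set.uIoc_subset_uIcc)
  rw [← intervalIntegral.integral_add_adjacent_intervals h_int_left h_int_right,
    intervalIntegral.integral_congr h_left, intervalIntegral.integral_congr h_right,
    intervalIntegral.integral_zero, add_zero,
    intervalIntegral.integral_sub h_int intervalIntegrable_const,
    intervalIntegral.integral_const, smul_eq_mul]

lemma periodic_intervalIntegral_le_of_superlevel {c : ℝ} (hf : Periodic f T)
    (h_int : ∀ t₁ t₂, IntervalIntegrable f volume t₁ t₂) (hab : a ≤ b) (hbT : b ≤ a + T)
    (h_ge : ∀ t ∈ Set.Icc a b, c ≤ f t) (h_le : ∀ t ∈ Set.Icc b (a + T), f t ≤ c)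
    (h_len : y - x = b - a) :
    ∫ t in x..y, f t ≤ ∫ t in a..b, f t := by
  have h_bound := periodic_intervalIntegral_le_add_integral_max hf h_int c
    (x := x) (y := y) (by linarith) (by linarith) a
  rw [integral_max_sub_eq_of_superlevel hab hbT (h_int a b) h_ge h_le, h_len] at h_bound
  linarith

lemma periodic_intervalIntegral_add_int_mul (hf : Periodic f T) (n : ℤ) (a b : ℝ) :
    ∫ t in a + n * T..b + n * T, f t = ∫ t in a..b, f t := by
  rw [← intervalIntegral.integral_comp_add_right]
  exact intervalIntegral.integral_congr fun t _ => hf.int_mul n t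

end PeriodicWindow

section AbsCos

variable {x t : ℝ}

lemma abs_cos_periodic : Function.Periodic (fun t => |cos t|) π := fun t => by
  simp only [cos_add_pi, abs_neg]

lemma intervalIntegrable_abs_cos (a b : ℝ) :
    IntervalIntegrable (fun t => |cos t|) MeasureTheory.volume a b :=
  continuous_cos.abs.intervalIntegrable a b

lemma cos_le_abs_cos_of_abs_le (hx : x ≤ π) (ht : |t| ≤ x) : cos x ≤ |cos t| :=
  calc cos x ≤ cos |t| := cos_le_cos_of_nonneg_of_le_pi (abs_nonneg t) hx ht
    _ = cos t := cos_abs t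
    _ ≤ |cos t| := le_abs_self _

lemma abs_cos_le_cos_of_mem_Icc (hx : 0 ≤ x) (ht : t ∈ Set.Icc x (π - x)) :
    |cos t| ≤ cos x := by
  refine abs_le.mpr ⟨?_, cos_le_cos_of_nonneg_of_le_pi hx (by linarith [ht.2]) ht.1⟩
  rw [← cos_pi_sub]
  exact cos_le_cos_of_nonneg_of_le_pi (hx.trans ht.1) (by linarith) ht.2

lemma integral_abs_cos_symm (hx : |x| ≤ π / 2) : ∫ t in -x..x, |cos t| = 2 * sin x := by
  have h_eq : Set.EqOn (fun t => |cos t|) cos (Set.uIcc (-x) x) := fun t ht =>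
    abs_of_nonneg (cos_nonneg_of_mem_Icc
      (Set.uIcc_subset_Icc (abs_le.mp (abs_neg x ▸ hx)) (abs_le.mp hx) ht))
  rw [intervalIntegral.integral_congr h_eq, integral_cos, sin_neg]
  ring

lemma integral_abs_cos_le (hx : 0 ≤ x) (hx' : x ≤ π / 2) (φ : ℝ) :
    ∫ t in (φ - x)..(φ + x), |cos t| ≤ 2 * sin x := by
  rw [← integral_abs_cos_symm (abs_le.mpr ⟨by linarith, hx'⟩)]
  exact periodic_intervalIntegral_le_of_superlevel (c := cos x) abs_cos_periodic
    intervalIntegrable_abs_cos (by linarith) (by linarith)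
    (fun t ht => cos_le_abs_cos_of_abs_le (by linarith) (abs_le.mpr ht))
    (fun t ht => abs_cos_le_cos_of_mem_Icc hx ⟨ht.1, by linarith [ht.2]⟩) (by ring)

lemma integral_abs_cos_int_mul_pi (hx : |x| ≤ π / 2) (n : ℤ) :
    ∫ t in (n * π - x)..(n * π + x), |cos t| = 2 * sin x := by
  rw [sub_eq_neg_add, add_comm (n * π) x,
    periodic_intervalIntegral_add_int_mul abs_cos_periodic, integral_abs_cos_symm hx]

end AbsCos

theorem stmt15_general (θ : ℝ) (h0 : 0 ≤ θ) (hπ : θ ≤ π) :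
    IsGreatest (Set.range fun φ : ℝ => ∫ t in (φ - θ / 2)..(φ + θ / 2), |cos t|)
      (2 * sin (θ / 2)) ∧
    ∀ n : ℤ, (∫ t in (n * π - θ / 2)..(n * π + θ / 2), |cos t|) = 2 * sin (θ / 2) := by
  have h_eq := integral_abs_cos_int_mul_pi (x := θ / 2) (abs_le.mpr ⟨by linarith, by linarith⟩)
  refine ⟨⟨⟨_, h_eq 0⟩, ?_⟩, h_eq⟩
  rintro _ ⟨φ, rfl⟩
  exact integral_abs_cos_le (by linarith) (by linarith) φ

/-- for `0 ≤ θ ≤ π`, the maximum over `φ ∈ [0, π]` of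
`∫_{φ−θ/2}^{φ+θ/2} |cos t| dt` equals `2 sin(θ/2)`, and it is attained at `φ = 0` and `φ = π`. -/
theorem stmt15 (θ : ℝ) (h0 : 0 ≤ θ) (hπ : θ ≤ π) :
    IsGreatest ((fun φ : ℝ => ∫ t in (φ - θ / 2)..(φ + θ / 2), |Real.cos t|) '' Set.Icc 0 π)
      (2 * Real.sin (θ / 2)) ∧
    (∫ t in (0 - θ / 2)..(0 + θ / 2), |Real.cos t|) = 2 * Real.sin (θ / 2) ∧
    (∫ t in (π - θ / 2)..(π + θ / 2), |Real.cos t|) = 2 * Real.sin (θ / 2) := by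
  obtain ⟨⟨-, h_le⟩, h_eq⟩ := stmt15_general θ h0 hπ
  have h_zero := h_eq 0
  have h_pi := h_eq 1
  rw [Int.cast_zero, zero_mul] at h_zero
  rw [Int.cast_one, one_mul] at h_pi
  exact ⟨⟨⟨0, ⟨le_rfl, pi_nonneg⟩, h_zero⟩, upperBounds_mono_set (Set.image_subset_range _ _) h_le⟩,
    h_zero, h_pi⟩
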